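/- Let F be a Ferrers diagram of semiperimeter n+1. If c ∈ Rec_min(G(F)) with CanonTop(c) = (U^0, V^1, U^1, …), then c = minrec(c); that is, for every j ∈ {1,…,n}: c_j = |{ℓ ∈ V^k : j < ℓ and k > i}| if j ∈ U^i, and c_j = |{ℓ ∈ U^k : ℓ < j and k ≥ i}| if j ∈ V^i. -/

import Mathlib

open Classical

/-- A Ferrers diagram of semiperimeter `n + 1`, encoded by the set of its row labels
(labels `0, …, n` run along the south-east border; `0` labels the top row and the
last label `n` is a column label). -/
structure Ferrers (n : ℕ) where
  rows : Finset (Fin (n + 1))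
  zero_mem : 0 ∈ rows
  last_not_mem : Fin.last n ∉ rows

namespace Ferrers

/-- `(i, j)` is a cell of the diagram: `i` is a row label, `j` a column label, `i < j`. -/
def Cell {n : ℕ} (F : Ferrers n) (i j : Fin (n + 1)) : Prop :=
  i ∈ F.rows ∧ j ∉ F.rows ∧ i < j

/-- Adjacency in the Ferrers graph `G(F)`. -/
def Adj {n : ℕ} (F : Ferrers n) (u v : Fin (n + 1)) : Prop :=
  F.Cell u v ∨ F.Cell v u

/-- Degree of a vertex in `G(F)`. -/
noncomputable def deg {n : ℕ} (F : Ferrers n) (v : Fin (n + 1)) : ℕ :=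
  {u | F.Adj v u}.ncard

/-- Toppling a single vertex.  The height at the sink `0` is kept equal to `c 0`
(grains sent to the sink vanish); toppling the sink sends one grain to each of
its neighbours. -/
noncomputable def topple {n : ℕ} (F : Ferrers n) (c : Fin (n + 1) → ℕ)
    (v : Fin (n + 1)) : Fin (n + 1) → ℕ :=
  fun u =>
    if u = 0 then c 0
    else if u = v then c v - F.deg v
    else if F.Adj v u then c u + 1
    else c u

/-- Toppling the vertices of a list in order. -/
noncomputable def toppleList {n : ℕ} (F : Ferrers n) (c : Fin (n + 1) → ℕ)
    (l : List (Fin (n + 1))) : Fin (n + 1) → ℕ :=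
  l.foldl F.topple c

/-- Simultaneous toppling of a set of vertices. -/
noncomputable def toppleSet {n : ℕ} (F : Ferrers n) (c : Fin (n + 1) → ℕ)
    (S : Set (Fin (n + 1))) : Fin (n + 1) → ℕ :=
  fun u =>
    if u = 0 then c 0
    else c u + {w ∈ S | F.Adj w u}.ncard - if u ∈ S then F.deg u else 0

/-- A configuration is stable if every non-sink vertex has fewer grains than its degree. -/
def Stable {n : ℕ} (F : Ferrers n) (c : Fin (n + 1) → ℕ) : Prop :=
  ∀ v, v ≠ 0 → c v < F.deg v

/-- A Dhar (burning) ordering for `c`: an ordering `v₀ = 0, v₁, …, vₙ` of all the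
vertices such that each `vᵢ` (`i ≥ 1`) is unstable after toppling `v₀, …, v_{i-1}`. -/
def DharSeq {n : ℕ} (F : Ferrers n) (c : Fin (n + 1) → ℕ) (l : List (Fin (n + 1))) : Prop :=
  l.length = n + 1 ∧ l.Nodup ∧ l.head? = some 0 ∧
    ∀ i, ∀ h : i < l.length, 1 ≤ i →
      F.deg (l.get ⟨i, h⟩) ≤ F.toppleList c (l.take i) (l.get ⟨i, h⟩)

/-- Recurrent configurations (via Dhar's criterion).  The height at the sink is
normalised to `0`. -/
def Recurrent {n : ℕ} (F : Ferrers n) (c : Fin (n + 1) → ℕ) : Prop :=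
  c 0 = 0 ∧ F.Stable c ∧ ∃ l, F.DharSeq c l

/-- Minimal recurrent configurations: recurrent with minimal total number of grains. -/
def RecMin {n : ℕ} (F : Ferrers n) (c : Fin (n + 1) → ℕ) : Prop :=
  F.Recurrent c ∧ ∀ c', F.Recurrent c' → (∑ v, c v) ≤ ∑ v, c' v

/-- Canonical toppling: block `0` is `{0}` (the sink); from then on, blocks with odd
index are the sets of currently unstable column vertices and blocks with even index
the sets of currently unstable row vertices.  The first component is the configuration
just before toppling the block recorded in the second component. -/
noncomputable def canonAux {n : ℕ} (F : Ferrers n) (c : Fin (n + 1) → ℕ) :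
    ℕ → ((Fin (n + 1) → ℕ) × Set (Fin (n + 1)))
  | 0 => (c, {0})
  | k + 1 =>
    let c' := F.toppleSet (canonAux F c k).1 (canonAux F c k).2
    (c', {v | v ≠ 0 ∧ (if k % 2 = 0 then v ∉ F.rows else v ∈ F.rows) ∧ F.deg v ≤ c' v})

/-- The `k`-th block of the canonical toppling of `c`:
`canonTop F c 0 = U⁰ = {0}`, `canonTop F c (2i-1) = Vⁱ`, `canonTop F c (2i) = Uⁱ`. -/
noncomputable def canonTop {n : ℕ} (F : Ferrers n) (c : Fin (n + 1) → ℕ) (k : ℕ) :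
    Set (Fin (n + 1)) :=
  (F.canonAux c k).2

/-- The configuration just before toppling the `k`-th block of the canonical toppling. -/
noncomputable def canonConfig {n : ℕ} (F : Ferrers n) (c : Fin (n + 1) → ℕ) (k : ℕ) :
    Fin (n + 1) → ℕ :=
  (F.canonAux c k).1

/-- The index of the block of the canonical toppling of `c` containing `v`. -/
noncomputable def bIdx {n : ℕ} (F : Ferrers n) (c : Fin (n + 1) → ℕ) (v : Fin (n + 1)) : ℕ :=
  sInf {k | v ∈ F.canonTop c k}

/-- `T` is a EW-tableau on `F` (entries of non-cells are normalised to `false`):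
the top row contains only `1`s, every other row contains a `0`, and there is no
rectangle with two diagonally opposite `0`s and two `1`s in the other corners. -/
def IsEW {n : ℕ} (F : Ferrers n) (T : Fin (n + 1) → Fin (n + 1) → Bool) : Prop :=
  (∀ i j, ¬F.Cell i j → T i j = false) ∧
  (∀ j, F.Cell 0 j → T 0 j = true) ∧
  (∀ i, i ∈ F.rows → i ≠ 0 → ∃ j, F.Cell i j ∧ T i j = false) ∧
  (∀ i i' j j', F.Cell i j → F.Cell i j' → F.Cell i' j → F.Cell i' j' →
    T i j = T i' j' → T i j' = T i' j → T i j = T i j')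

/-- The configuration associated to a tableau: row vertices count the `1`s in their
row, column vertices count the `0`s in their column (the sink is normalised to `0`). -/
noncomputable def phiTC {n : ℕ} (F : Ferrers n) (T : Fin (n + 1) → Fin (n + 1) → Bool) :
    Fin (n + 1) → ℕ :=
  fun v =>
    if v = 0 then 0
    else if v ∈ F.rows then {j | F.Cell v j ∧ T v j = true}.ncard
    else {i | F.Cell i v ∧ T i v = false}.ncard

/-- The tableau associated to a (minimal recurrent) configuration: a cell `(i, j)`
gets a `1` exactly when `i` lies in an earlier block than `j` in the canonical
toppling of `c`. -/
noncomputable def phiCT {n : ℕ} (F : Ferrers n) (c : Fin (n + 1) → ℕ) :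
    Fin (n + 1) → Fin (n + 1) → Bool :=
  fun i j => if F.Cell i j ∧ F.bIdx c i < F.bIdx c j then true else false

/-- The supplementary tableau of `T`: `S i j = 1` exactly when the row vertex `i`
lies in an earlier block than the column vertex `j` in `CanonTop (φ_TC T)`. -/
noncomputable def suppS {n : ℕ} (F : Ferrers n) (T : Fin (n + 1) → Fin (n + 1) → Bool)
    (i j : Fin (n + 1)) : Bool :=
  if F.bIdx (F.phiTC T) i < F.bIdx (F.phiTC T) j then true else false

/-- The entry of `T` in cell `(j, k)` is a cornersupport entry. -/
def Cornersupport {n : ℕ} (F : Ferrers n) (T : Fin (n + 1) → Fin (n + 1) → Bool)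
    (j k : Fin (n + 1)) : Prop :=
  ∃ j' k', j' ∈ F.rows ∧ k' ∉ F.rows ∧ j' ≠ j ∧ k' ≠ k ∧
    F.suppS T j' k' = !(T j k) ∧ F.suppS T j' k = T j k ∧ F.suppS T j k' = T j k

/-- `ν_v(T)`: the number of non-cornersupport `0`s in row `v` (if `v` is a row label),
resp. non-cornersupport `1`s in column `v` (if `v` is a column label). -/
noncomputable def nu {n : ℕ} (F : Ferrers n) (T : Fin (n + 1) → Fin (n + 1) → Bool)
    (v : Fin (n + 1)) : ℕ :=
  if v ∈ F.rows then {k | F.Cell v k ∧ T v k = false ∧ ¬F.Cornersupport T v k}.ncard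
  else {i | F.Cell i v ∧ T i v = true ∧ ¬F.Cornersupport T i v}.ncard

/-- `μ_v(c)`: if `v ∈ Uⁱ`, the number of `k ∈ Vⁱ` with `k > v`; if `v ∈ Vⁱ`,
the number of `k ∈ U^{i-1}` with `k < v`.  In both cases the relevant block is the
one immediately preceding the block of `v`. -/
noncomputable def mu {n : ℕ} (F : Ferrers n) (c : Fin (n + 1) → ℕ) (v : Fin (n + 1)) : ℕ :=
  if v ∈ F.rows then {k | v < k ∧ k ∈ F.canonTop c (F.bIdx c v - 1)}.ncard
  else {k | k < v ∧ k ∈ F.canonTop c (F.bIdx c v - 1)}.ncard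

/-- The minimal recurrent configuration with the same canonical toppling as `c`:
if `j ∈ Uⁱ` then `minrec c j = |{ℓ ∈ Vᵏ : j < ℓ, k > i}|`, and if `j ∈ Vⁱ` then
`minrec c j = |{ℓ ∈ Uᵏ : ℓ < j, k ≥ i}|` (blocks `Vᵏ` sit at odd index `2k - 1`,
blocks `Uᵏ` at even index `2k`). -/
noncomputable def minrecFun {n : ℕ} (F : Ferrers n) (c : Fin (n + 1) → ℕ) :
    Fin (n + 1) → ℕ :=
  fun j =>
    if j = 0 then 0
    else if j ∈ F.rows then
      {l | j < l ∧ ∃ k, F.bIdx c j < 2 * k + 1 ∧ l ∈ F.canonTop c (2 * k + 1)}.ncard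
    else
      {l | l < j ∧ ∃ k, F.bIdx c j < 2 * k ∧ l ∈ F.canonTop c (2 * k)}.ncard

/-- The number of edges of `G(F)` (equivalently, the number of cells of `F`). -/
noncomputable def edgeCount {n : ℕ} (F : Ferrers n) : ℕ :=
  {p : Fin (n + 1) × Fin (n + 1) | F.Cell p.1 p.2}.ncard

end Ferrers

namespace Ferrers

variable {n : ℕ} {F : Ferrers n} {c : Fin (n + 1) → ℕ} {u v w : Fin (n + 1)}

lemma Adj.symm (h : F.Adj u v) : F.Adj v u := Or.symm h

lemma Adj.mem_rows_iff (h : F.Adj u v) : u ∈ F.rows ↔ v ∉ F.rows := by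
  rcases h with h | h <;> simp [h.1, h.2.1]

/-- A vertex that is not toppled receives one grain from each toppled neighbour. -/
lemma toppleList_apply (hu : u ≠ 0) {l : List (Fin (n + 1))} (hl : u ∉ l) (hn : l.Nodup) :
    F.toppleList c l u = c u + {w | w ∈ l ∧ F.Adj w u}.ncard := by
  induction l generalizing c with
  | nil => simp [toppleList]
  | cons a l ih =>
    obtain ⟨hal, hn⟩ := List.nodup_cons.1 hn
    obtain ⟨hua, hul⟩ := not_or.1 (mt List.mem_cons.2 hl)
    have hstep : F.toppleList c (a :: l) u = F.toppleList (F.topple c a) l u := rfl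
    rw [hstep, ih hul hn]
    by_cases ha : F.Adj a u
    · have hset : {w | w ∈ a :: l ∧ F.Adj w u} = insert a {w | w ∈ l ∧ F.Adj w u} := by
        ext w
        simp only [List.mem_cons, Set.mem_ofPred_eq, Set.mem_insert_iff]
        grind
      rw [hset, Set.ncard_insert_of_notMem (fun h => hal h.1)]
      simp only [topple, if_neg hu, if_neg hua, if_pos ha]
      omega
    · have hset : {w | w ∈ a :: l ∧ F.Adj w u} = {w | w ∈ l ∧ F.Adj w u} := by
        ext w
        simp only [List.mem_cons, Set.mem_ofPred_eq]
        grind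
      rw [hset]
      simp only [topple, if_neg hu, if_neg hua, if_neg ha]

/-- Sorting the vertices by a rank function yields a burning order as soon as every vertex
becomes unstable once its neighbours of smaller rank have toppled. -/
lemma exists_dharSeq_of_rank (b : Fin (n + 1) → ℕ) (hb : ∀ v, b v = 0 ↔ v = 0)
    (hc : ∀ v, v ≠ 0 → F.deg v ≤ c v + {w | b w < b v ∧ F.Adj w v}.ncard) :
    ∃ l, F.DharSeq c l := by
  let r : Fin (n + 1) → Fin (n + 1) → Prop := fun u v => b u ≤ b v
  have : Std.Total r := ⟨fun u v => le_total (b u) (b v)⟩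
  have : IsTrans _ r := ⟨fun u v w => le_trans (α := ℕ)⟩
  set l := (Finset.univ : Finset (Fin (n + 1))).toList.insertionSort r
  have hperm : l.Perm (Finset.univ : Finset (Fin (n + 1))).toList := List.perm_insertionSort r _
  have hnodup : l.Nodup := hperm.nodup_iff.2 (Finset.nodup_toList _)
  have hmem : ∀ v, v ∈ l := fun v => hperm.mem_iff.2 (by simp)
  have hlen : l.length = n + 1 := by rw [hperm.length_eq]; simp
  have hsort : l.Pairwise r := List.pairwise_insertionSort r _
  have hmono : ∀ i j (hi : i < l.length) (hj : j < l.length), i ≤ j → b l[i] ≤ b l[j] := by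
    intro i j hi hj hij
    rcases hij.eq_or_lt with rfl | hij
    · exact le_rfl
    · exact List.pairwise_iff_getElem.1 hsort i j hi hj hij
  have hhead : l[0]'(by omega) = 0 := by
    obtain ⟨j, hj, hj0⟩ := List.getElem_of_mem (hmem 0)
    have h := hmono 0 j (by omega) hj (Nat.zero_le _)
    rw [hj0, (hb 0).2 rfl] at h
    exact (hb _).1 (Nat.le_zero.1 h)
  refine ⟨l, hlen, hnodup, ?_, ?_⟩
  · rw [List.head?_eq_getElem?, List.getElem?_eq_getElem (by omega), hhead]
  · intro i hi hi1
    simp only [List.get_eq_getElem]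
    have hne : l[i] ≠ 0 := by
      intro h
      have := (hnodup.getElem_inj_iff (hi := hi) (hj := by omega)).1 (h.trans hhead.symm)
      omega
    have hnot : l[i] ∉ l.take i := by
      intro h
      obtain ⟨j, hj, hji⟩ := List.mem_take_iff_getElem.1 h
      have := (hnodup.getElem_inj_iff).1 hji
      omega
    rw [toppleList_apply hne hnot (hnodup.sublist (List.take_sublist _ _))]
    refine (hc _ hne).trans (Nat.add_le_add_left (Set.ncard_le_ncard ?_ (Set.toFinite _)) _)
    rintro w ⟨hw, hadj⟩
    refine ⟨?_, hadj⟩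
    obtain ⟨j, hj, rfl⟩ := List.getElem_of_mem (hmem w)
    have hji : j < i := by
      by_contra! h
      exact absurd (hmono i j hi hj h) (not_le.2 hw)
    exact List.mem_take_iff_getElem.2 ⟨j, by omega, rfl⟩

/-- The vertices toppled in the first `k` blocks of the canonical toppling. -/
def toppledBefore (F : Ferrers n) (c : Fin (n + 1) → ℕ) (k : ℕ) : Set (Fin (n + 1)) :=
  {w | ∃ i < k, w ∈ F.canonTop c i}

lemma toppledBefore_mono {k m : ℕ} (h : k ≤ m) :
    F.toppledBefore c k ⊆ F.toppledBefore c m :=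
  fun _ ⟨i, hi, hw⟩ => ⟨i, hi.trans_le h, hw⟩

lemma mem_toppledBefore_succ {k : ℕ} :
    w ∈ F.toppledBefore c (k + 1) ↔ w ∈ F.toppledBefore c k ∨ w ∈ F.canonTop c k := by
  constructor
  · rintro ⟨i, hi, hw⟩
    rcases (Nat.lt_succ_iff.1 hi).eq_or_lt with rfl | hi
    · exact Or.inr hw
    · exact Or.inl ⟨i, hi, hw⟩
  · rintro (⟨i, hi, hw⟩ | hw)
    · exact ⟨i, by omega, hw⟩
    · exact ⟨k, by omega, hw⟩

lemma mem_canonTop_zero : v ∈ F.canonTop c 0 ↔ v = 0 := Iff.rfl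

lemma mem_canonTop_succ {k : ℕ} : v ∈ F.canonTop c (k + 1) ↔
    v ≠ 0 ∧ (if k % 2 = 0 then v ∉ F.rows else v ∈ F.rows) ∧
      F.deg v ≤ F.canonConfig c (k + 1) v := Iff.rfl

lemma deg_le_canonConfig {k : ℕ} (hv : v ≠ 0) (h : v ∈ F.canonTop c k) :
    F.deg v ≤ F.canonConfig c k v := by
  cases k with
  | zero => exact absurd (mem_canonTop_zero.1 h) hv
  | succ k => exact (mem_canonTop_succ.1 h).2.2

lemma mem_rows_of_mem_canonTop {k : ℕ} (h : v ∈ F.canonTop c k) :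
    v ∈ F.rows ↔ k % 2 = 0 := by
  cases k with
  | zero => simp [mem_canonTop_zero.1 h, F.zero_mem]
  | succ k =>
    have h := (mem_canonTop_succ.1 h).2.1
    split_ifs at h with hk
    · simp only [h, false_iff]
      omega
    · simp only [h, true_iff]
      omega

lemma ncard_neighbors_le_deg (S : Set (Fin (n + 1))) :
    {w | w ∈ S ∧ F.Adj w v}.ncard ≤ F.deg v :=
  Set.ncard_le_ncard (fun _ h => h.2.symm) (Set.toFinite _)

lemma notMem_canonTop_of_balance (hs : F.Stable c) {k : ℕ}
    (hbal : ∀ u, u ≠ 0 → F.canonConfig c k u + (if u ∈ F.toppledBefore c k then F.deg u else 0) =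
      c u + {w | w ∈ F.toppledBefore c k ∧ F.Adj w u}.ncard)
    (hu : u ∈ F.toppledBefore c k) : u ∉ F.canonTop c k := by
  intro hk
  cases k with
  | zero =>
    obtain ⟨i, hi, -⟩ := hu
    omega
  | succ k =>
    have hu0 := (mem_canonTop_succ.1 hk).1
    have h1 := deg_le_canonConfig hu0 hk
    have h2 := hbal u hu0
    have h3 := ncard_neighbors_le_deg (F := F) (v := u) (F.toppledBefore c (k + 1))
    have h4 := hs u hu0
    rw [if_pos hu] at h2
    omega

/-- Conservation of grains during the canonical toppling. -/
lemma canonConfig_balance (hs : F.Stable c) (k : ℕ) : ∀ u, u ≠ 0 →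
    F.canonConfig c k u + (if u ∈ F.toppledBefore c k then F.deg u else 0) =
      c u + {w | w ∈ F.toppledBefore c k ∧ F.Adj w u}.ncard := by
  induction k with
  | zero => intro u _; simp [toppledBefore, canonConfig, canonAux]
  | succ k ih =>
    intro u hu
    have hdisj := fun v => notMem_canonTop_of_balance (u := v) hs ih
    have hset : {w | w ∈ F.toppledBefore c (k + 1) ∧ F.Adj w u} =
        {w | w ∈ F.toppledBefore c k ∧ F.Adj w u} ∪ {w ∈ F.canonTop c k | F.Adj w u} := by
      ext w
      simp only [Set.mem_ofPred_eq, Set.mem_union, mem_toppledBefore_succ]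
      tauto
    rw [hset, Set.ncard_union_eq
      (Set.disjoint_left.2 fun w h h' => hdisj w h.1 h'.1) (Set.toFinite _) (Set.toFinite _)]
    have hconf : F.canonConfig c (k + 1) u = F.canonConfig c k u +
        {w ∈ F.canonTop c k | F.Adj w u}.ncard -
          if u ∈ F.canonTop c k then F.deg u else 0 := if_neg hu
    have hbal := ih u hu
    rw [hconf]
    simp only [mem_toppledBefore_succ]
    by_cases h1 : u ∈ F.canonTop c k
    · have h2 : u ∉ F.toppledBefore c k := fun h => hdisj u h h1
      have h3 := deg_le_canonConfig hu h1
      simp only [h1, h2, or_true, if_true, if_false] at hbal ⊢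
      omega
    · simp only [h1, or_false, if_false] at hbal ⊢
      omega

/-- The blocks of the canonical toppling are disjoint. -/
lemma canonTop_index_unique (hs : F.Stable c) {i k : ℕ}
    (hi : v ∈ F.canonTop c i) (hk : v ∈ F.canonTop c k) : i = k := by
  rcases lt_trichotomy i k with h | h | h
  · exact absurd hk (notMem_canonTop_of_balance hs (canonConfig_balance hs k) ⟨i, h, hi⟩)
  · exact h
  · exact absurd hi (notMem_canonTop_of_balance hs (canonConfig_balance hs i) ⟨k, h, hk⟩)

/-- A vertex with enough toppled neighbours is eventually toppled. -/
lemma exists_mem_toppledBefore (hs : F.Stable c) {m : ℕ} (hv : v ≠ 0)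
    (h : F.deg v ≤ c v + {w | w ∈ F.toppledBefore c m ∧ F.Adj w v}.ncard) :
    ∃ k, v ∈ F.toppledBefore c k := by
  obtain ⟨k, hk, hpar⟩ : ∃ k, m ≤ k + 1 ∧
      (if k % 2 = 0 then v ∉ F.rows else v ∈ F.rows) := by
    by_cases hr : v ∈ F.rows
    · exact ⟨2 * m + 1, by omega, by rw [if_neg (by omega)]; exact hr⟩
    · exact ⟨2 * m, by omega, by rw [if_pos (by omega)]; exact hr⟩
  by_cases hT : v ∈ F.toppledBefore c (k + 1)
  · exact ⟨_, hT⟩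
  have hbal := canonConfig_balance hs (k + 1) v hv
  rw [if_neg hT] at hbal
  have hle : {w | w ∈ F.toppledBefore c m ∧ F.Adj w v}.ncard ≤
      {w | w ∈ F.toppledBefore c (k + 1) ∧ F.Adj w v}.ncard :=
    Set.ncard_le_ncard (fun _ h => ⟨toppledBefore_mono hk h.1, h.2⟩) (Set.toFinite _)
  exact ⟨k + 2, k + 1, by omega, mem_canonTop_succ.2 ⟨hv, hpar, by omega⟩⟩

/-- The canonical toppling of a recurrent configuration exhausts all vertices. -/
lemma Recurrent.exists_mem_canonTop (hc : F.Recurrent c) (v : Fin (n + 1)) :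
    ∃ k, v ∈ F.canonTop c k := by
  obtain ⟨-, hs, l, hlen, hnodup, hhead, hdhar⟩ := hc
  have key : ∀ i ≤ l.length, ∃ m, ∀ w ∈ l.take i, w ∈ F.toppledBefore c m := by
    intro i
    induction i with
    | zero => simp
    | succ i ih =>
      intro hi
      obtain ⟨m, hm⟩ := ih (by omega)
      obtain ⟨k, hk⟩ : ∃ k, l[i] ∈ F.toppledBefore c k := by
        by_cases h0 : l[i] = 0
        · exact ⟨1, 0, one_pos, h0⟩
        have hi1 : 1 ≤ i := by
          by_contra! h
          obtain rfl : i = 0 := by omega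
          rw [List.head?_eq_getElem?, List.getElem?_eq_getElem (by omega)] at hhead
          exact h0 (Option.some.inj hhead)
        have hd := hdhar i (by omega) hi1
        simp only [List.get_eq_getElem] at hd
        have hnot : l[i] ∉ l.take i := by
          intro h
          obtain ⟨j, hj, hji⟩ := List.mem_take_iff_getElem.1 h
          have := (hnodup.getElem_inj_iff).1 hji
          omega
        rw [toppleList_apply h0 hnot (hnodup.sublist (List.take_sublist _ _))] at hd
        refine exists_mem_toppledBefore (m := m) hs h0 (hd.trans (Nat.add_le_add_left ?_ _))
        exact Set.ncard_le_ncard (fun w h => ⟨hm w h.1, h.2⟩) (Set.toFinite _)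
      refine ⟨max m k, fun w hw => ?_⟩
      rw [List.take_succ_eq_append_getElem (by omega), List.mem_append, List.mem_singleton] at hw
      rcases hw with hw | rfl
      · exact toppledBefore_mono (le_max_left _ _) (hm w hw)
      · exact toppledBefore_mono (le_max_right _ _) hk
  have hmem : v ∈ l := by
    have huniv : l.toFinset = Finset.univ :=
      Finset.eq_univ_of_card _ (by rw [List.toFinset_card_of_nodup hnodup, hlen, Fintype.card_fin])
    exact List.mem_toFinset.1 (huniv ▸ Finset.mem_univ v)
  obtain ⟨m, hm⟩ := key l.length le_rfl
  obtain ⟨i, -, hi⟩ := hm v (by rwa [List.take_length])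
  exact ⟨i, hi⟩

/-- In a minimal recurrent configuration, the height of a vertex is the number of its
neighbours in later blocks of the canonical toppling. -/
lemma RecMin.apply_eq_ncard (hc : F.RecMin c) {k : ℕ} (hv : v ≠ 0) (hk : v ∈ F.canonTop c k) :
    c v = {w | F.Adj v w ∧ ∃ m, k < m ∧ w ∈ F.canonTop c m}.ncard := by
  obtain ⟨hrec, hmin⟩ := hc
  have hs := hrec.2.1
  choose b hb using hrec.exists_mem_canonTop
  have hb_iff : ∀ w m, w ∈ F.canonTop c m ↔ b w = m := fun w m =>
    ⟨fun h => canonTop_index_unique hs (hb w) h, fun h => h ▸ hb w⟩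
  have hb0 : ∀ w, b w = 0 ↔ w = 0 := fun w => by rw [← hb_iff, mem_canonTop_zero]
  have hne : ∀ u w, F.Adj u w → b u ≠ b w := by
    intro u w h heq
    have h1 := mem_rows_of_mem_canonTop (hb u)
    have h2 := mem_rows_of_mem_canonTop (hb w)
    have h3 := h.mem_rows_iff
    rw [heq] at h1
    tauto
  have hbefore : ∀ w m, w ∈ F.toppledBefore c m ↔ b w < m := by
    intro w m
    simp [toppledBefore, hb_iff]
  have hdeg : ∀ u, F.deg u = {w | b w < b u ∧ F.Adj w u}.ncard +
      {w | b u < b w ∧ F.Adj w u}.ncard := by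
    intro u
    rw [← Set.ncard_union_eq (Set.disjoint_left.2 fun w h h' => lt_asymm h.1 h'.1)
      (Set.toFinite _) (Set.toFinite _), deg]
    congr 1
    ext w
    constructor
    · intro h
      rcases lt_or_gt_of_ne (hne u w h) with hlt | hlt
      · exact Or.inr ⟨hlt, h.symm⟩
      · exact Or.inl ⟨hlt, h.symm⟩
    · rintro (h | h) <;> exact h.2.symm
  have hunst : ∀ u, u ≠ 0 → F.deg u ≤ c u + {w | b w < b u ∧ F.Adj w u}.ncard := by
    intro u hu
    have h1 := deg_le_canonConfig hu (hb u)
    have h2 := canonConfig_balance hs (b u) u hu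
    simp only [hbefore, lt_irrefl, if_false] at h2
    omega
  let c' : Fin (n + 1) → ℕ := fun u => if u = 0 then 0 else {w | b u < b w ∧ F.Adj w u}.ncard
  have hc' : ∀ u, u ≠ 0 → c' u = {w | b u < b w ∧ F.Adj w u}.ncard := fun u hu => if_neg hu
  have hle : ∀ u, c' u ≤ c u := by
    intro u
    by_cases hu : u = 0
    · simp [c', hu]
    · have h1 := hunst u hu
      have h2 := hdeg u
      rw [hc' u hu]
      omega
  have hrec' : F.Recurrent c' := by
    refine ⟨if_pos rfl, fun u hu => (hle u).trans_lt (hs u hu), ?_⟩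
    refine exists_dharSeq_of_rank b hb0 fun u hu => ?_
    rw [hc' u hu, hdeg u, add_comm]
  have hsum : ∑ u, c' u = ∑ u, c u :=
    le_antisymm (Finset.sum_le_sum fun u _ => hle u) (hmin c' hrec')
  have heq := (Finset.sum_eq_sum_iff_of_le fun u _ => hle u).1 hsum v (Finset.mem_univ v)
  rw [← heq, hc' v hv, (hb_iff v k).1 hk]
  congr 1
  ext w
  simp only [Set.mem_ofPred_eq, hb_iff]
  constructor
  · rintro ⟨h1, h2⟩
    exact ⟨h2.symm, b w, h1, rfl⟩
  · rintro ⟨h1, m, h2, rfl⟩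
    exact ⟨h2, h1.symm⟩

end Ferrers

/-- Every minimal recurrent configuration `c` on `G(F)` satisfies
`c = minrec c`; i.e. `c_j = |{ℓ ∈ Vᵏ : j < ℓ, k > i}|` if `j ∈ Uⁱ` and
`c_j = |{ℓ ∈ Uᵏ : ℓ < j, k ≥ i}|` if `j ∈ Vⁱ`
(where `Uⁱ = canonTop c (2i)` and `Vⁱ = canonTop c (2i - 1)`). -/
theorem recmin_eq_minrec {n : ℕ} (F : Ferrers n) (c : Fin (n + 1) → ℕ)
    (hc : F.RecMin c) :
    (∀ i : ℕ, ∀ j : Fin (n + 1), j ∈ F.canonTop c (2 * i) → j ≠ 0 →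
      c j = {l : Fin (n + 1) | j < l ∧ ∃ k, i ≤ k ∧ l ∈ F.canonTop c (2 * k + 1)}.ncard) ∧
    (∀ i : ℕ, ∀ j : Fin (n + 1), j ∈ F.canonTop c (2 * i + 1) →
      c j = {l : Fin (n + 1) | l < j ∧ ∃ k, i + 1 ≤ k ∧ l ∈ F.canonTop c (2 * k)}.ncard) := by
  refine ⟨fun i j hj hj0 => ?_, fun i j hj => ?_⟩
  · rw [hc.apply_eq_ncard hj0 hj]
    congr 1
    have hjr : j ∈ F.rows := (Ferrers.mem_rows_of_mem_canonTop hj).2 (by omega)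
    ext l
    constructor
    · rintro ⟨hadj, m, hm, hl⟩
      have hlr : l ∉ F.rows := hadj.mem_rows_iff.1 hjr
      have hpar := mt (Ferrers.mem_rows_of_mem_canonTop hl).2 hlr
      refine ⟨hadj.elim (fun h => h.2.2) fun h => absurd h.1 hlr, m / 2, by omega, ?_⟩
      rwa [show 2 * (m / 2) + 1 = m by omega]
    · rintro ⟨hjl, k, hk, hl⟩
      have hlr : l ∉ F.rows := fun h => by
        have := (Ferrers.mem_rows_of_mem_canonTop hl).1 h
        omega
      exact ⟨Or.inl ⟨hjr, hlr, hjl⟩, _, by omega, hl⟩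
  · have hjr : j ∉ F.rows := fun h => by
      have := (Ferrers.mem_rows_of_mem_canonTop hj).1 h
      omega
    have hj0 : j ≠ 0 := fun h => hjr (h ▸ F.zero_mem)
    rw [hc.apply_eq_ncard hj0 hj]
    congr 1
    ext l
    constructor
    · rintro ⟨hadj, m, hm, hl⟩
      have hlr : l ∈ F.rows := hadj.symm.mem_rows_iff.2 hjr
      have hpar := (Ferrers.mem_rows_of_mem_canonTop hl).1 hlr
      refine ⟨hadj.elim (fun h => absurd h.1 hjr) fun h => h.2.2, m / 2, by omega, ?_⟩
      rwa [show 2 * (m / 2) = m by omega]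
    · rintro ⟨hlj, k, hk, hl⟩
      have hlr : l ∈ F.rows := (Ferrers.mem_rows_of_mem_canonTop hl).2 (by omega)
      exact ⟨Or.inr ⟨hlr, hjr, hlj⟩, _, by omega, hl⟩
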